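/- Let L be a regular language over a finite alphabet Σ and let L^c = Σ* \ L be its complement. Then tc(L^c) ≤ |Σ|·(tc(L) + 2). Moreover, this bound is tight: for every n ≥ 1 the language L = {b^n} (for a fixed b ∈ Σ) satisfies tc(L) = n and tc(L^c) = |Σ|·(n + 2). -/

import Mathlib

/-- An incomplete DFA over alphabet `α` with state type `σ`:
the transition function is a partial function, modelled as `Option`-valued. -/
structure IDFA (α : Type) (σ : Type) where
  /-- The (partial) transition function. -/
  step : σ → α → Option σ
  /-- The start state. -/
  start : σ
  /-- The set of accepting states. -/
  accept : Set σ

namespace IDFA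

variable {α σ : Type}

/-- The extended (partial) transition function on words. -/
def evalFrom (A : IDFA α σ) (q : σ) (w : List α) : Option σ :=
  w.foldl (fun oq a => oq.bind fun p => A.step p a) (some q)

/-- Running the automaton from the start state. -/
def eval (A : IDFA α σ) (w : List α) : Option σ :=
  A.evalFrom A.start w

/-- The language recognized by an incomplete DFA: words on which the run is
defined and ends in an accepting state. -/
def accepts (A : IDFA α σ) : Set (List α) :=
  {w | ∃ q ∈ A.accept, A.eval w = some q}

/-- `#tr(A)`: the number of (defined) transitions of `A`. -/
noncomputable def trCount (A : IDFA α σ) : ℕ :=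
  {p : σ × α | (A.step p.1 p.2).isSome}.ncard

/-- `#tr(A, b)`: the number of `b`-transitions of `A`. -/
noncomputable def trCountOn (A : IDFA α σ) (b : α) : ℕ :=
  {q : σ | (A.step q b).isSome}.ncard

/-- An incomplete DFA is connected if every state is reachable from the start state. -/
def Connected (A : IDFA α σ) : Prop :=
  ∀ q : σ, ∃ w : List α, A.evalFrom A.start w = some q

end IDFA

/-- A language is regular iff it is recognized by some incomplete DFA with
finitely many states. -/
def IsRegularLang {α : Type} (L : Set (List α)) : Prop :=
  ∃ (σ : Type) (_ : Finite σ) (A : IDFA α σ), A.accepts = L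

/-- `tc(L)`: the transition complexity of `L`, i.e. the minimal number of
transitions of any incomplete DFA recognizing `L`. -/
noncomputable def tc {α : Type} (L : Set (List α)) : ℕ :=
  sInf {n | ∃ (σ : Type) (_ : Finite σ) (A : IDFA α σ), A.accepts = L ∧ A.trCount = n}

/-- `tc_b(L)`: the `b`-transition complexity of `L`, i.e. the minimal number of
`b`-transitions of any incomplete DFA recognizing `L`. -/
noncomputable def tcOn {α : Type} (L : Set (List α)) (b : α) : ℕ :=
  sInf {n | ∃ (σ : Type) (_ : Finite σ) (A : IDFA α σ), A.accepts = L ∧ A.trCountOn b = n}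

/-- `sc(L)`: the (incomplete-DFA) state complexity of `L`, i.e. the number of
states of a minimal incomplete DFA recognizing `L`. -/
noncomputable def sc {α : Type} (L : Set (List α)) : ℕ :=
  sInf {n | ∃ (σ : Type) (_ : Finite σ) (A : IDFA α σ), A.accepts = L ∧ Nat.card σ = n}

namespace IDFA

theorem eval_snoc {α σ : Type} (A : IDFA α σ) (w : List α) (a : α) :
    A.eval (w ++ [a]) = (A.eval w).bind fun p => A.step p a := by
  simp [eval, evalFrom, List.foldl_append]

theorem eval_congr {α σ : Type} (A : IDFA α σ) {u v : List α} (h : A.eval u = A.eval v)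
    (w : List α) : A.eval (u ++ w) = A.eval (v ++ w) := by
  simp only [eval, evalFrom] at h
  simp only [eval, evalFrom, List.foldl_append, h]

theorem eval_prefix {α σ : Type} (A : IDFA α σ) (u w : List α)
    (h : (A.eval (u ++ w)).isSome) : (A.eval u).isSome := by
  induction w using List.reverseRecOn with
  | nil => simpa using h
  | append_singleton w a ih =>
    apply ih
    rw [← List.append_assoc, eval_snoc] at h
    cases h' : A.eval (u ++ w) with
    | none => simp [h'] at h
    | some q => rfl

/-- States used in the completion. -/
def cset {α σ : Type} (A : IDFA α σ) : Set (Option σ) :=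
  {none} ∪ {some A.start} ∪
    (fun p : σ × α => A.step p.1 p.2) '' {p : σ × α | (A.step p.1 p.2).isSome}

theorem cset_closed {α σ : Type} (A : IDFA α σ) (o : Option σ) (a : α) :
    (o.bind fun p => A.step p a) ∈ A.cset := by
  cases o with
  | none => left; left; rfl
  | some q =>
    cases h : A.step q a with
    | none => left; left; simp [h]
    | some r => right; exact ⟨(q, a), by simp [h], by simp⟩

/-- The complement automaton. -/
def compl {α σ : Type} (A : IDFA α σ) : IDFA α A.cset where
  step o a := some ⟨o.1.bind fun p => A.step p a, A.cset_closed _ _⟩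
  start := ⟨some A.start, Or.inl (Or.inr rfl)⟩
  accept := {o | ¬ ∃ q ∈ A.accept, o.1 = some q}

theorem compl_eval {α σ : Type} (A : IDFA α σ) (w : List α) :
    ∃ h, A.compl.eval w = some ⟨A.eval w, h⟩ := by
  induction w using List.reverseRecOn with
  | nil => exact ⟨Or.inl (Or.inr rfl), rfl⟩
  | append_singleton w a ih =>
    obtain ⟨h, e⟩ := ih
    rw [eval_snoc, eval_snoc, e]
    exact ⟨A.cset_closed _ _, rfl⟩

theorem compl_accepts {α σ : Type} (A : IDFA α σ) : A.compl.accepts = A.acceptsᶜ := by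
  ext w
  obtain ⟨h, e⟩ := A.compl_eval w
  simp only [accepts, Set.mem_ofPred_eq, Set.mem_compl_iff, e]
  constructor
  · rintro ⟨q, hq, e'⟩
    cases e'
    exact hq
  · intro hq
    exact ⟨_, hq, rfl⟩

theorem compl_trCount {α σ : Type} [Finite α] [Finite σ] (A : IDFA α σ) :
    A.compl.trCount ≤ Nat.card α * (A.trCount + 2) := by
  have h1 : A.compl.trCount ≤ Nat.card (A.cset × α) := Set.ncard_le_card _
  rw [Nat.card_prod, mul_comm] at h1
  refine h1.trans (Nat.mul_le_mul_left _ ?_)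
  have h2 : Nat.card A.cset = A.cset.ncard := rfl
  rw [h2, cset]
  have h3 := Set.ncard_union_le ({none} ∪ {some A.start})
    ((fun p : σ × α => A.step p.1 p.2) '' {p : σ × α | (A.step p.1 p.2).isSome})
  have h4 := Set.ncard_union_le {(none : Option σ)} {some A.start}
  have h5 := Set.ncard_image_le (f := fun p : σ × α => A.step p.1 p.2)
    (Set.toFinite {p : σ × α | (A.step p.1 p.2).isSome})
  simp only [Set.ncard_singleton] at h4
  unfold trCount
  omega

/-- The automaton for `{bⁿ}`. -/
noncomputable def single {α : Type} (b : α) (n : ℕ) : IDFA α (Fin (n + 1)) where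
  step i a := open Classical in
    if h : a = b ∧ i.1 < n then some ⟨i.1 + 1, by omega⟩ else none
  start := 0
  accept := {Fin.last n}

theorem single_step {α : Type} (b : α) (n : ℕ) (i j : Fin (n + 1)) (a : α) :
    (single b n).step i a = some j ↔ a = b ∧ j.1 = i.1 + 1 := by
  have := j.2
  simp only [single]
  split_ifs with h
  · simp [Fin.ext_iff, h.1, eq_comm]
  · simp only [reduceCtorEq, false_iff]
    rintro ⟨h1, h2⟩
    exact h ⟨h1, by omega⟩

theorem single_eval {α : Type} (b : α) (n : ℕ) (w : List α) : ∀ q : Fin (n + 1),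
    (single b n).eval w = some q ↔ w = List.replicate q.1 b := by
  induction w using List.reverseRecOn with
  | nil =>
    intro q
    have : (single b n).eval [] = some 0 := rfl
    rw [this]
    rw [Option.some_inj, Fin.ext_iff, @eq_comm _ [], List.replicate_eq_nil_iff]
    exact eq_comm
  | append_singleton w a ih =>
    intro q
    rw [eval_snoc, Option.bind_eq_some_iff]
    simp only [ih, single_step]
    constructor
    · rintro ⟨p, rfl, rfl, h⟩
      rw [h, List.replicate_succ']
    · intro h
      obtain ⟨k, hk⟩ : ∃ k, q.1 = k + 1 := by
        refine Nat.exists_eq_succ_of_ne_zero fun h0 => ?_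
        simp [h0] at h
      rw [hk, List.replicate_succ'] at h
      have h' := List.append_inj' h rfl
      refine ⟨⟨k, by omega⟩, h'.1, by simpa using h'.2, hk⟩

theorem single_accepts {α : Type} (b : α) (n : ℕ) :
    (single b n).accepts = {List.replicate n b} := by
  ext w
  simp only [accepts, single_eval, Set.mem_ofPred_eq, Set.mem_singleton_iff]
  simp [single]

theorem single_trCount {α : Type} (b : α) (n : ℕ) : (single b n).trCount ≤ n := by
  have : {p : Fin (n + 1) × α | ((single b n).step p.1 p.2).isSome} ⊆
      (fun i : Fin n => (i.castSucc, b)) '' Set.univ := by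
    rintro ⟨i, a⟩ h
    obtain ⟨j, hj⟩ := Option.isSome_iff_exists.1 h
    rw [single_step] at hj
    have := j.2
    exact ⟨⟨i.1, by simp at hj; omega⟩, trivial, Prod.ext rfl hj.1.symm⟩
  have h1 := Set.ncard_le_ncard this (Set.toFinite _)
  have h2 := Set.ncard_image_le (f := fun i : Fin n => (i.castSucc, b)) Set.finite_univ
  rw [Set.ncard_univ, Nat.card_fin] at h2
  unfold trCount
  omega

theorem mem_accepts_congr {α σ : Type} (A : IDFA α σ) {u v : List α} (h : A.eval u = A.eval v)
    (w : List α) : u ++ w ∈ A.accepts ↔ v ++ w ∈ A.accepts := by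
  simp only [accepts, Set.mem_ofPred_eq, A.eval_congr h w]

theorem isSome_of_mem {α σ : Type} (A : IDFA α σ) {u : List α} (w : List α)
    (h : u ++ w ∈ A.accepts) : (A.eval u).isSome := by
  obtain ⟨q, -, h⟩ := h
  exact A.eval_prefix u w (by simp [h])

theorem repl_inj {α : Type} (b : α) {m n : ℕ} (h : List.replicate m b = List.replicate n b) :
    m = n := by
  simpa using congrArg List.length h

theorem single_lower {α σ : Type} [Finite α] [Finite σ] (b : α) (n : ℕ) (A : IDFA α σ)
    (hA : A.accepts = {List.replicate n b}) : n ≤ A.trCount := by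
  have hd : ∀ i, i ≤ n → (A.eval (List.replicate i b)).isSome := by
    intro i hi
    apply A.isSome_of_mem (List.replicate (n - i) b)
    rw [hA, ← List.replicate_add]
    simp [hi]
  let f : Fin n → {p : σ × α | (A.step p.1 p.2).isSome} := fun i =>
    ⟨((A.eval (List.replicate i.1 b)).get (hd _ i.2.le), b), by
      have h := hd (i.1 + 1) i.2
      rw [List.replicate_succ', eval_snoc] at h
      obtain ⟨q, hq⟩ := Option.isSome_iff_exists.1 (hd _ i.2.le)
      simpa [hq] using h⟩
  have hf : Function.Injective f := by
    intro i j hij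
    have h1 : A.eval (List.replicate i.1 b) = A.eval (List.replicate j.1 b) := by
      simpa [f, Option.get_inj] using hij
    have h2 := (A.mem_accepts_congr h1 (List.replicate (n - i.1) b)).1
    simp only [hA, ← List.replicate_add, Set.mem_singleton_iff] at h2
    have hi := i.2
    have h3 := repl_inj b (h2 (by congr 1; omega))
    ext; omega
  have := Nat.card_le_card_of_injective f hf
  simpa [trCount] using this

theorem compl_lower {α σ : Type} [Finite α] [Finite σ] (b : α) (n : ℕ) (A : IDFA α σ)
    (hA : A.accepts = {List.replicate n b}ᶜ) : Nat.card α * (n + 2) ≤ A.trCount := by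
  have hd : ∀ w, (A.eval w).isSome := by
    intro w
    apply A.isSome_of_mem (List.replicate (n + 1) b)
    rw [hA]
    intro h
    have := congrArg List.length h
    simp at this
    omega
  let f : α × Fin (n + 2) → {p : σ × α | (A.step p.1 p.2).isSome} := fun i =>
    ⟨((A.eval (List.replicate i.2.1 b)).get (hd _), i.1), by
      have h := hd (List.replicate i.2.1 b ++ [i.1])
      rw [eval_snoc] at h
      obtain ⟨q, hq⟩ := Option.isSome_iff_exists.1 (hd (List.replicate i.2.1 b))
      simpa [hq] using h⟩
  have key : ∀ i j : ℕ, i ≤ n →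
      A.eval (List.replicate i b) = A.eval (List.replicate j b) → i = j := by
    intro i j hi h1
    have h2 := (A.mem_accepts_congr h1 (List.replicate (n - i) b)).2
    simp only [hA, ← List.replicate_add, Set.mem_compl_iff, Set.mem_singleton_iff] at h2
    by_contra hne
    exact h2 (fun h => hne (by have := repl_inj b h; omega)) (by congr 1; omega)
  have hf : Function.Injective f := by
    rintro ⟨a, i⟩ ⟨c, j⟩ hij
    have h1 : A.eval (List.replicate i.1 b) = A.eval (List.replicate j.1 b) ∧ a = c := by
      simpa [f, Option.get_inj] using hij
    obtain ⟨h1, rfl⟩ := h1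
    have hi := i.2
    have hj := j.2
    have : i = j := by
      ext
      by_cases h : i.1 ≤ n
      · exact key _ _ h h1
      · by_cases h' : j.1 ≤ n
        · exact (key _ _ h' h1.symm).symm
        · omega
    rw [this]
  have := Nat.card_le_card_of_injective f hf
  simpa [trCount] using this

end IDFA

theorem tc_le {α σ : Type} [Finite σ] (A : IDFA α σ) : tc A.accepts ≤ A.trCount :=
  Nat.sInf_le ⟨σ, inferInstance, A, rfl, rfl⟩

theorem tc_attained {α : Type} {L : Set (List α)} (h : IsRegularLang L) :
    ∃ (σ : Type) (_ : Finite σ) (A : IDFA α σ), A.accepts = L ∧ A.trCount = tc L := by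
  obtain ⟨σ, hσ, A, hA⟩ := h
  exact Nat.sInf_mem
    (s := {n | ∃ (σ : Type) (_ : Finite σ) (A : IDFA α σ), A.accepts = L ∧ A.trCount = n})
    ⟨_, σ, hσ, A, hA, rfl⟩

theorem tc_compl_le {α : Type} [Finite α] (L : Set (List α)) (h : IsRegularLang L) :
    tc Lᶜ ≤ Nat.card α * (tc L + 2) ∧ IsRegularLang Lᶜ := by
  obtain ⟨σ, hσ, A, rfl, hA⟩ := tc_attained h
  rw [← hA, ← A.compl_accepts]
  exact ⟨(tc_le _).trans A.compl_trCount, _, inferInstance, A.compl, rfl⟩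

/-- `tc(Lᶜ) ≤ |Σ|·(tc(L) + 2)` for every regular language `L`,
and the bound is tight: for every `n ≥ 1` the language `L = {bⁿ}` satisfies
`tc(L) = n` and `tc(Lᶜ) = |Σ|·(n + 2)`. -/
theorem tc_compl_le_and_tight {α : Type} [Finite α] (b : α) :
    (∀ L : Set (List α), IsRegularLang L →
      tc Lᶜ ≤ Nat.card α * (tc L + 2)) ∧
    (∀ n : ℕ, 1 ≤ n →
      tc ({List.replicate n b} : Set (List α)) = n ∧
      tc (({List.replicate n b} : Set (List α))ᶜ) = Nat.card α * (n + 2)) := by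
  refine ⟨fun L h => (tc_compl_le L h).1, fun n _ => ?_⟩
  have hr : IsRegularLang ({List.replicate n b} : Set (List α)) :=
    ⟨_, inferInstance, IDFA.single b n, IDFA.single_accepts b n⟩
  have h1 : tc ({List.replicate n b} : Set (List α)) = n := by
    apply le_antisymm
    · rw [← IDFA.single_accepts]
      exact (tc_le _).trans (IDFA.single_trCount b n)
    · obtain ⟨σ, _, A, hA, h⟩ := tc_attained hr
      rw [← h]
      exact IDFA.single_lower b n A hA
  refine ⟨h1, le_antisymm ?_ ?_⟩
  · have := (tc_compl_le _ hr).1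
    rwa [h1] at this
  · obtain ⟨σ, _, A, hA, h⟩ := tc_attained (tc_compl_le _ hr).2
    rw [← h]
    exact IDFA.compl_lower b n A hA
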